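/- Let m and p be positive integers and set l = 4mp+1, t = 4mp−2p+1, p' = 2mp. Then for every integer k with 1 ≤ k ≤ p' one has σ_{i_k} + σ_{i_{p'+1−k}} = 0. -/

import Mathlib

open Finset

noncomputable section

/-- The q-Pochhammer symbol `(a; q)_n = ∏_{k=0}^{n-1} (1 - a q^k)`. -/
def qPoch (a q : ℂ) (n : ℕ) : ℂ := ∏ k ∈ Finset.range n, (1 - a * q ^ k)

/-- The Gaussian binomial coefficient `[n; k]_q` as a polynomial in `q` over `ℤ`,
defined by the q-Pascal rule `[n; k] = [n-1; k-1] + q^k [n-1; k]`.  It is the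
polynomial equal to `(q;q)_n / ((q;q)_{n-k} (q;q)_k)`. -/
def gaussPoly : ℕ → ℕ → Polynomial ℤ
  | _, 0 => 1
  | 0, _ + 1 => 0
  | n + 1, k + 1 => gaussPoly n k + Polynomial.X ^ (k + 1) * gaussPoly n (k + 1)

/-- The Gaussian binomial coefficient `[n; k]_q` evaluated at `q : ℂ`. -/
def gbin (q : ℂ) (n k : ℕ) : ℂ := Polynomial.aeval q (gaussPoly n k)

/-- `σ_j = (-1)^⌊(2j-1)t/l⌋`. -/
def sigmaT (l t j : ℕ) : ℤ := (-1) ^ ((2 * j - 1) * t / l)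

/-- `r(j)`: the unique integer with `r(j) ≡ (2j-1)t (mod 2l)` and `-l < r(j) < l`. -/
def rT (l t j : ℕ) : ℤ :=
  if (((2 * j - 1) * t % (2 * l) : ℕ) : ℤ) < (l : ℤ) then (((2 * j - 1) * t % (2 * l) : ℕ) : ℤ)
  else (((2 * j - 1) * t % (2 * l) : ℕ) : ℤ) - 2 * (l : ℤ)

/-- `r'(j) = (|r(j)| + 1)/2`. -/
def rpT (l t j : ℕ) : ℕ := ((rT l t j).natAbs + 1) / 2

open Classical in
/-- `i_k`: the unique `j ∈ {1, …, (l-1)/2}` with `r'(j) = k`. -/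
def iT (l t k : ℕ) : ℕ :=
  if h : ∃ j, j ∈ Finset.Icc 1 ((l - 1) / 2) ∧ rpT l t j = k then h.choose else 0

/-- `ε_{i,j,m}`: `1` if `j ≡ -i, -i-1 (mod 2m)`, `-1` if `j ≡ i, i-1 (mod 2m)`,
`0` otherwise (and `0` when `m ∣ i`, a case excluded in all uses). -/
def epsLO (m i j : ℕ) : ℤ :=
  if m ∣ i then 0
  else if 2 * m ∣ (i + j) ∨ 2 * m ∣ (i + j + 1) then 1
  else if (2 * (m : ℤ)) ∣ ((j : ℤ) - (i : ℤ)) ∨ (2 * (m : ℤ)) ∣ ((j : ℤ) - (i : ℤ) + 1) then -1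
  else 0

/-- `Δ_{i,j,m}`: `1` if `j ≡ -i, -i+1 (mod 2m)`, `-1` if `j ≡ i, i+1 (mod 2m)`,
`0` otherwise (and `0` when `m ∣ i`, a case excluded in all uses). -/
def deltaLO (m i j : ℕ) : ℤ :=
  if m ∣ i then 0
  else if 2 * m ∣ (i + j) ∨ 2 * m ∣ (i + j - 1) then 1
  else if (2 * (m : ℤ)) ∣ ((j : ℤ) - (i : ℤ)) ∨ (2 * (m : ℤ)) ∣ ((j : ℤ) - (i : ℤ) - 1) then -1
  else 0

/-- `γ_{i,m} = 1` if `i ≡ 1, …, m-1 (mod 2m)` and `-1` otherwise. -/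
def gamLO (m i : ℕ) : ℤ :=
  if 1 ≤ i % (2 * m) ∧ i % (2 * m) ≤ m - 1 then 1 else -1

/-- `β_{i,m} = 1` if `i ≡ 1, …, m-1 (mod 2m)`, `-1` if `i ≡ m+1, …, 2m-1 (mod 2m)`,
and `0` if `m ∣ i`. -/
def betLO (m i : ℕ) : ℤ :=
  if 1 ≤ i % (2 * m) ∧ i % (2 * m) ≤ m - 1 then 1
  else if m + 1 ≤ i % (2 * m) ∧ i % (2 * m) ≤ 2 * m - 1 then -1
  else 0

/-- Extend a tuple `f : Fin P → Fin N` to `n : ℕ → ℕ` with `n i = f (i-1)` for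
`1 ≤ i ≤ P` and `n i = 0` otherwise (in particular `n 0 = 0`). -/
def extTup (P N : ℕ) (f : Fin P → Fin N) : ℕ → ℕ :=
  fun i => if h : 1 ≤ i ∧ i ≤ P then (f ⟨i - 1, by omega⟩ : ℕ) else 0

/-- Takata's exponent `a(n)` (an integer; every integer division below is exact). -/
def aT (l t : ℕ) (n : ℕ → ℕ) : ℤ :=
  -(∑ j ∈ Icc 1 ((l - 1) / 2), (∑ k ∈ Icc (rpT l t j) ((l - 1) / 2),
      (sigmaT l t (iT l t k) + sigmaT l t (iT l t ((l - 1) / 2 + 1 - k))) / 2) *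
      ((n j : ℤ) - (n (j - 1) : ℤ)))
  - ∑ j ∈ Icc 1 ((l - 1) / 2 - 1), ((sigmaT l t (j + 1) + sigmaT l t ((l - 1) / 2 + 1 - j)) / 2) * (n j : ℤ)
  - ((sigmaT l t ((l - 1) / 2) + 1) / 2) * (n ((l - 1) / 2) : ℤ)
  - ∑ j ∈ Icc 1 ((l - 1) / 2), sigmaT l t j

/-- Takata's exponent `b₁(n)` (an integer; every integer division below is exact
whenever the factor it multiplies is nonzero). -/
def b1T (l t : ℕ) (n : ℕ → ℕ) : ℤ :=
  -aT l t n
  + ∑ k ∈ Icc 1 ((l - t) / 2), ((1 - sigmaT l t (iT l t k)) / 2) * (n (iT l t k - 1) : ℤ)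
  - ∑ k ∈ Icc ((l - t) / 2 + 1) ((l - 1) / 2), (n (iT l t k - 1) : ℤ)
  + ∑ k ∈ Icc ((l - t) / 2 + 1) ((l - 1) / 2), ((1 + sigmaT l t (iT l t k)) / 2) * (n (iT l t k) : ℤ)
  - (1 + sigmaT l t ((l - 1) / 2)) * (n ((l - 1) / 2) : ℤ)
  + ∑ j ∈ Icc 1 ((l - 1) / 2 - 1), ((sigmaT l t (j + 1) - sigmaT l t j) / 2) * (n j : ℤ)
  - ∑ k ∈ Icc 1 ((l - 1) / 2 - 1), ∑ k' ∈ Icc (k + 1) ((l - 1) / 2),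
      ((1 + Int.sign ((iT l t k : ℤ) - (iT l t k' : ℤ))) / 2) *
        ((sigmaT l t (iT l t k) - sigmaT l t (iT l t k')) / 2) *
        ((n (iT l t k) : ℤ) - (n (iT l t k - 1) : ℤ)) *
        ((n (iT l t k') : ℤ) - (n (iT l t k' - 1) : ℤ))
  + ∑ j ∈ Icc 1 ((l - 1) / 2), sigmaT l t j *
      (∑ k ∈ Icc 1 (rpT l t j), ((n (iT l t k) : ℤ) - (n (iT l t k - 1) : ℤ))) * (n (j - 1) : ℤ)

/-- Takata's exponent `b₂(n)`. -/
def b2T (l t : ℕ) (n : ℕ → ℕ) : ℤ :=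
  if l < 2 * t then
    ∑ k ∈ Icc ((l - t) / 2 + 1) ((t - 1) / 2),
      ((1 + sigmaT l t (iT l t k)) / 2) * (n (iT l t k - 1) : ℤ)
  else
    -∑ k ∈ Icc ((t + 1) / 2 + 1) ((l - t) / 2),
      ((1 + sigmaT l t (iT l t k)) / 2) * (n (iT l t k - 1) : ℤ)

/-- Takata's `κ(p')`. -/
def kapT (l t N : ℕ) (n : ℕ → ℕ) : ℤ :=
  if sigmaT l t ((l - 1) / 2) = -1 then -(N : ℤ) * (n ((l - 1) / 2) : ℤ) else 0

/-- Takata's `τ(j)`. -/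
def tauT (l t : ℕ) (q : ℂ) (n : ℕ → ℕ) (j : ℕ) : ℂ :=
  if sigmaT l t j = -1 then (-1 : ℂ) ^ (n j - n (j - 1))
  else q ^ ((((n j : ℤ) - (n (j - 1) : ℤ)) * (((n j : ℤ) - (n (j - 1) : ℤ)) + 1)) / 2)

/-- Takata's `X(n)`. -/
def XT (l t N : ℕ) (q : ℂ) (n : ℕ → ℕ) : ℂ :=
  (-1 : ℂ) ^ (n ((l - 1) / 2)) * q ^ kapT l t N n *
    (qPoch q q (N - 1) * qPoch q q (n ((l - 1) / 2)) / qPoch q q (N - n ((l - 1) / 2) - 1)) *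
    ∏ j ∈ Icc 1 ((l - 1) / 2), tauT l t q n j / qPoch q q (n j - n (j - 1))

/-!
If `s * t ≡ 1 (mod 2l)`, multiplying `(2j - 1) t ≡ ±(2k - 1)` by `s` gives
`(2k - 1) s ≡ ±(2j - 1)`, with the same sign: the maps `r'` for `t` and for `s` are mutually
inverse, and `σ_{i_k}` for `t` is `σ_k` for `s`. When `l = 2np + 1` and `t = l - 2p` one can
take `s = n + (n + 1) l`, and the claim becomes a statement about the parity of
`⌊(2k - 1) n / l⌋ + ⌊(2k' - 1) n / l⌋` for `k + k' = np + 1`. That sum is exactly `n - 1`.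
-/

section BalancedResidue

variable {l t j : ℕ}

lemma rT_eq_bmod (l t j : ℕ) : rT l t j = (((2 * j - 1) * t : ℕ) : ℤ).bmod (2 * l) := by
  rw [rT, Int.bmod, show ((2 * l : ℕ) + 1 : ℤ) / 2 = l by omega]
  push_cast
  rfl

lemma rT_eq_iff (hl : 0 < l) (hj : 1 ≤ j) {r : ℤ} :
    rT l t j = r ↔ -(l : ℤ) ≤ r ∧ r < l ∧ (2 * j - 1) * t ≡ r [ZMOD 2 * l] := by
  have hcast : (((2 * j - 1) * t : ℕ) : ℤ) = (2 * j - 1) * t := by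
    push_cast [show 1 ≤ 2 * j by omega]
    ring
  rw [rT_eq_bmod, Int.bmod_eq_iff (by omega), hcast, Int.modEq_iff_dvd]
  push_cast
  rw [show -(2 * (l : ℤ) / 2) = -l by omega, show (2 * (l : ℤ) + 1) / 2 = l by omega]

lemma modEq_rT (hl : 0 < l) (hj : 1 ≤ j) : (2 * j - 1) * t ≡ rT l t j [ZMOD 2 * l] :=
  ((rT_eq_iff hl hj).1 rfl).2.2

lemma odd_rT (hl : 0 < l) (ht : Odd t) (hj : 1 ≤ j) : Odd (rT l t j) := by
  have hodd : Odd ((2 * j - 1) * t : ℤ) := by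
    have : Odd (2 * j - 1 : ℤ) := by grind
    exact this.mul (by exact_mod_cast ht)
  rw [Int.odd_iff] at hodd ⊢
  rw [← hodd]
  exact ((modEq_rT hl hj).of_mul_right _).symm

lemma isUnit_sigmaT (l t j : ℕ) : IsUnit (sigmaT l t j) :=
  isUnit_neg_one.pow _

lemma sigmaT_mul_abs_rT (hl : 0 < l) (t j : ℕ) : sigmaT l t j * |rT l t j| = rT l t j := by
  rw [rT, sigmaT, neg_one_pow_eq_pow_mod_two, ← Nat.mod_mul_left_div_self]
  have hlt : (2 * j - 1) * t % (2 * l) < 2 * l := Nat.mod_lt _ (by omega)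
  generalize (2 * j - 1) * t % (2 * l) = x at hlt ⊢
  split_ifs with hx
  · rw [Nat.div_eq_of_lt (by omega), pow_zero, one_mul, Nat.abs_cast]
  · rw [Nat.div_eq_of_lt_le (k := 1) (by omega) (by omega), pow_one, abs_of_neg (by omega)]
    ring

lemma abs_rT (hl : 0 < l) (ht : Odd t) (hj : 1 ≤ j) : |rT l t j| = 2 * rpT l t j - 1 := by
  obtain ⟨u, hu⟩ := odd_rT hl ht hj
  rw [rpT, Int.abs_eq_natAbs]
  omega

lemma one_le_rpT (hl : 0 < l) (ht : Odd t) (hj : 1 ≤ j) : 1 ≤ rpT l t j := by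
  have := abs_rT hl ht hj
  have := abs_nonneg (rT l t j)
  omega

lemma modEq_sigmaT_mul (hl : 0 < l) (ht : Odd t) (hj : 1 ≤ j) :
    (2 * j - 1) * t ≡ sigmaT l t j * (2 * rpT l t j - 1) [ZMOD 2 * l] := by
  rw [← abs_rT hl ht hj, sigmaT_mul_abs_rT hl]
  exact modEq_rT hl hj

lemma sigmaT_eq_and_rpT_eq_of_modEq {k : ℕ} {ε : ℤ} (hε : IsUnit ε) (hj : 1 ≤ j) (hk : 1 ≤ k)
    (hkl : 2 * k ≤ l) (h : (2 * j - 1) * t ≡ ε * (2 * k - 1) [ZMOD 2 * l]) :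
    sigmaT l t j = ε ∧ rpT l t j = k := by
  have hl : 0 < l := by omega
  have hr : rT l t j = ε * (2 * k - 1) := by
    refine (rT_eq_iff hl hj).2 ⟨?_, ?_, h⟩ <;>
      rcases Int.isUnit_iff.1 hε with rfl | rfl <;> omega
  have habs : |rT l t j| = 2 * k - 1 := by
    rw [hr, abs_mul, Int.isUnit_iff_abs_eq.1 hε, one_mul, abs_of_nonneg (by omega)]
  constructor
  · have := sigmaT_mul_abs_rT hl t j
    rw [habs, hr] at this
    exact mul_right_cancel₀ (by omega) this
  · have : ((rT l t j).natAbs : ℤ) = 2 * k - 1 := by rw [Int.natCast_natAbs, habs]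
    rw [rpT]
    omega

end BalancedResidue

section Reciprocity

variable {l s t j k : ℕ}

lemma odd_of_mul_modEq_one (hst : s * t ≡ 1 [MOD 2 * l]) : Odd s ∧ Odd t := by
  rw [← Nat.odd_mul, Nat.odd_iff]
  exact hst.of_mul_right l

lemma rpT_modEq_of_mul_modEq_one (hl : 0 < l) (hst : s * t ≡ 1 [MOD 2 * l]) (hj : 1 ≤ j) :
    (2 * rpT l t j - 1) * s ≡ sigmaT l t j * (2 * j - 1) [ZMOD 2 * l] := by
  have hmod := modEq_sigmaT_mul hl (odd_of_mul_modEq_one hst).2 hj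
  have hε := Int.isUnit_mul_self (isUnit_sigmaT l t j)
  generalize sigmaT l t j = ε, rpT l t j = k at hmod hε ⊢
  have hst' : (s * t : ℤ) ≡ 1 [ZMOD 2 * l] := by exact_mod_cast Int.natCast_modEq_iff.2 hst
  calc (2 * k - 1) * (s : ℤ)
      = ε * s * (ε * (2 * k - 1)) := by linear_combination (1 - 2 * k) * s * hε
    _ ≡ ε * s * ((2 * j - 1) * t) [ZMOD 2 * l] := hmod.symm.mul_left _
    _ = ε * (2 * j - 1) * (s * t) := by ring
    _ ≡ ε * (2 * j - 1) * 1 [ZMOD 2 * l] := hst'.mul_left _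
    _ = ε * (2 * j - 1) := mul_one _

lemma sigmaT_rpT_eq_and_rpT_rpT_eq (hst : s * t ≡ 1 [MOD 2 * l]) (hj : 1 ≤ j)
    (hjl : 2 * j ≤ l) : sigmaT l s (rpT l t j) = sigmaT l t j ∧ rpT l s (rpT l t j) = j := by
  have hl : 0 < l := by omega
  exact sigmaT_eq_and_rpT_eq_of_modEq (isUnit_sigmaT l t j)
    (one_le_rpT hl (odd_of_mul_modEq_one hst).2 hj) hj hjl (rpT_modEq_of_mul_modEq_one hl hst hj)

lemma abs_rT_lt (hlt : l.Coprime t) (hj : 1 ≤ j) (hjl : 2 * j ≤ l) : |rT l t j| < l := by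
  have hl : 0 < l := by omega
  obtain ⟨hlow, hup, hmod⟩ := (rT_eq_iff (t := t) hl hj).1 rfl
  refine abs_lt.2 ⟨hlow.lt_of_ne fun h => ?_, hup⟩
  have hdvd : (l : ℤ) ∣ (2 * j - 1) * t := by
    rw [← h] at hmod
    exact (hmod.of_mul_left 2).dvd_iff.2 (dvd_neg.2 dvd_rfl)
  have := Int.le_of_dvd (by omega) (hlt.isCoprime.dvd_of_dvd_mul_right hdvd)
  omega

lemma rpT_mem_Icc (hl : Odd l) (ht : Odd t) (hlt : l.Coprime t) (hj : j ∈ Icc 1 ((l - 1) / 2)) :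
    rpT l t j ∈ Icc 1 ((l - 1) / 2) := by
  rw [mem_Icc] at hj ⊢
  have := abs_rT hl.pos ht hj.1
  have := abs_rT_lt hlt hj.1 (by omega)
  have := one_le_rpT hl.pos ht hj.1
  grind

lemma iT_spec (h : ∃ j, j ∈ Icc 1 ((l - 1) / 2) ∧ rpT l t j = k) :
    iT l t k ∈ Icc 1 ((l - 1) / 2) ∧ rpT l t (iT l t k) = k := by
  rw [iT, dif_pos h]
  exact h.choose_spec

theorem sigmaT_iT_of_mul_modEq_one (hl : Odd l) (hst : s * t ≡ 1 [MOD 2 * l])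
    (hk : k ∈ Icc 1 ((l - 1) / 2)) : sigmaT l t (iT l t k) = sigmaT l s k := by
  have hts : t * s ≡ 1 [MOD 2 * l] := by rwa [mul_comm t s]
  have hmem : rpT l s k ∈ Icc 1 ((l - 1) / 2) :=
    rpT_mem_Icc hl (odd_of_mul_modEq_one hst).1
      (Nat.coprime_of_mul_modEq_one t (hst.of_mul_left 2)).symm hk
  rw [mem_Icc] at hk
  have hinv : rpT l t (rpT l s k) = k := (sigmaT_rpT_eq_and_rpT_rpT_eq hts hk.1 (by omega)).2
  obtain ⟨hi, hik⟩ := iT_spec ⟨_, hmem, hinv⟩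
  rw [mem_Icc] at hi
  have hsigma := (sigmaT_rpT_eq_and_rpT_rpT_eq hst hi.1 (by omega)).1
  rw [← hsigma, hik]

end Reciprocity

lemma odd_mul_mod_add_le {n p k : ℕ} (hk : 1 ≤ k) (hknp : k ≤ n * p) :
    (2 * k - 1) * n % (2 * n * p + 1) + n ≤ 2 * n * p + 1 := by
  have hn : 0 < n := Nat.pos_of_mul_pos_right (hk.trans hknp)
  have hx : (2 * k - 1) * n + n = 2 * n * k := by
    rw [← Nat.succ_mul, show (2 * k - 1).succ = 2 * k by omega]
    ring
  have hquot : (2 * k - 1) * n / (2 * n * p + 1) < n :=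
    Nat.div_lt_of_lt_mul (Nat.mul_lt_mul_of_pos_right (by grind) hn)
  have hrem := Nat.mod_lt ((2 * k - 1) * n) (2 * n * p).succ_pos
  have hdiv := Nat.div_add_mod ((2 * k - 1) * n) (2 * n * p + 1)
  generalize (2 * k - 1) * n / (2 * n * p + 1) = a at *
  generalize (2 * k - 1) * n % (2 * n * p + 1) = u at *
  by_contra! hlt
  obtain ⟨w, hw⟩ := Nat.exists_eq_add_of_lt hlt
  -- Adding `n` carries into the next multiple of `2np + 1 ≡ 1 (mod 2n)`.
  have hdvd : 2 * n ∣ a + 1 + (w + 1) := by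
    refine (Nat.dvd_add_right (Dvd.intro (p * (a + 1)) rfl)).1 ⟨k, ?_⟩
    linear_combination hx + hdiv - hw
  have := Nat.le_of_dvd (by omega) hdvd
  omega

lemma odd_mul_div_add_odd_mul_div_add_one {n p k k' : ℕ} (hk : 1 ≤ k) (hk' : 1 ≤ k')
    (hkk' : k + k' = n * p + 1) :
    (2 * k - 1) * n / (2 * n * p + 1) + (2 * k' - 1) * n / (2 * n * p + 1) + 1 = n := by
  have hsum : (2 * k - 1) * n + (2 * k' - 1) * n + n = (2 * n * p + 1) * n := by
    rw [← add_mul, ← Nat.succ_mul]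
    congr 1
    grind
  have hn : 0 < n := Nat.pos_of_mul_pos_right (show 0 < n * p by omega)
  have hrem := odd_mul_mod_add_le hk (show k ≤ n * p by omega)
  have hrem' := odd_mul_mod_add_le hk' (show k' ≤ n * p by omega)
  have hdiv := Nat.div_add_mod ((2 * k - 1) * n) (2 * n * p + 1)
  have hdiv' := Nat.div_add_mod ((2 * k' - 1) * n) (2 * n * p + 1)
  generalize 2 * n * p + 1 = l at *
  generalize (2 * k - 1) * n = x at *
  generalize (2 * k' - 1) * n = y at *
  have hlt : x / l + y / l < n := by
    refine lt_of_mul_lt_mul_left (a := l) ?_ l.zero_le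
    linarith [Nat.mul_div_le x l, Nat.mul_div_le y l]
  have hgt : n < x / l + y / l + 2 :=
    lt_of_mul_lt_mul_left (a := l) (by linarith) l.zero_le
  omega

lemma sigmaT_add_mul_self {l k : ℕ} (hl : 0 < l) (hk : 1 ≤ k) (s c : ℕ) :
    sigmaT l (s + c * l) k = (-1) ^ c * sigmaT l s k := by
  have hodd : Odd (2 * k - 1) := ⟨k - 1, by omega⟩
  rw [sigmaT, sigmaT, mul_add, ← mul_assoc, Nat.add_mul_div_right _ _ hl, pow_add, pow_mul _ _ c,
    hodd.neg_one_pow, mul_comm]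

lemma sigmaT_add_neg_one_pow_mul_sigmaT_eq_zero {n p k k' : ℕ} (hk : 1 ≤ k) (hk' : 1 ≤ k')
    (hkk' : k + k' = n * p + 1) :
    sigmaT (2 * n * p + 1) n k + (-1) ^ n * sigmaT (2 * n * p + 1) n k' = 0 := by
  have h := odd_mul_div_add_odd_mul_div_add_one hk hk' hkk'
  rw [sigmaT, sigmaT]
  generalize (2 * k - 1) * n / (2 * n * p + 1) = a at h ⊢
  generalize (2 * k' - 1) * n / (2 * n * p + 1) = b at h ⊢
  rw [← h, ← pow_add, show a + b + 1 + b = a + 1 + 2 * b by ring, pow_add _ (a + 1), pow_mul]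
  ring_nf

lemma add_mul_mul_sub_add_one_modEq_one {n : ℕ} (hn : 0 < n) (p : ℕ) :
    (n + (n + 1) * (2 * n * p + 1)) * (2 * n * p - 2 * p + 1) ≡ 1
      [MOD 2 * (2 * n * p + 1)] := by
  obtain ⟨q, hq⟩ : ∃ q, n * p = p + q := Nat.exists_eq_add_of_le (Nat.le_mul_of_pos_left p hn)
  have ht : 2 * n * p - 2 * p + 1 = 2 * q + 1 := by grind
  have hmul : (n + (n + 1) * (2 * n * p + 1)) * (2 * q + 1)
      = 1 + 2 * (2 * n * p + 1) * (n + q * (n + 1)) := by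
    linear_combination 2 * n * hq.symm
  rw [ht, hmul]
  exact Nat.add_modulus_mul_modEq_iff.2 rfl

lemma sigmaT_iT_eq_neg_one_pow_mul {n p k : ℕ} (hk : 1 ≤ k) (hknp : k ≤ n * p) :
    sigmaT (2 * n * p + 1) (2 * n * p - 2 * p + 1)
        (iT (2 * n * p + 1) (2 * n * p - 2 * p + 1) k)
      = (-1) ^ (n + 1) * sigmaT (2 * n * p + 1) n k := by
  have hn : 0 < n := Nat.pos_of_mul_pos_right (hk.trans hknp)
  rw [sigmaT_iT_of_mul_modEq_one ⟨n * p, by ring⟩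
      (add_mul_mul_sub_add_one_modEq_one hn p) (mem_Icc.2 ⟨hk, by grind⟩),
    sigmaT_add_mul_self (Nat.succ_pos _) hk]

theorem sigma_iT_sum_neg_pos_general (n p k : ℕ) (hk1 : 1 ≤ k) (hk2 : k ≤ n * p) :
    sigmaT (2 * n * p + 1) (2 * n * p - 2 * p + 1)
        (iT (2 * n * p + 1) (2 * n * p - 2 * p + 1) k)
      + (-1) ^ n * sigmaT (2 * n * p + 1) (2 * n * p - 2 * p + 1)
        (iT (2 * n * p + 1) (2 * n * p - 2 * p + 1) (n * p + 1 - k)) = 0 := by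
  have hk' : 1 ≤ n * p + 1 - k := by omega
  rw [sigmaT_iT_eq_neg_one_pow_mul hk1 hk2, sigmaT_iT_eq_neg_one_pow_mul hk' (by omega)]
  have hsum := sigmaT_add_neg_one_pow_mul_sigmaT_eq_zero (n := n) (p := p) hk1 hk' (by omega)
  linear_combination (-1) ^ (n + 1) * hsum

/-- Lemma 2.5(i): for `l = 4mp+1`, `t = 4mp-2p+1`, `p' = 2mp`, one has
`σ_(i_k) + σ_(i_(p'+1-k)) = 0` for `1 ≤ k ≤ p'`. -/
theorem sigma_iT_sum_neg_pos
    (m p k : ℕ) (hm : 0 < m) (hp : 0 < p)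
    (hk1 : 1 ≤ k) (hk2 : k ≤ 2 * m * p) :
    sigmaT (4 * m * p + 1) (4 * m * p - 2 * p + 1) (iT (4 * m * p + 1) (4 * m * p - 2 * p + 1) k)
      + sigmaT (4 * m * p + 1) (4 * m * p - 2 * p + 1) (iT (4 * m * p + 1) (4 * m * p - 2 * p + 1) (2 * m * p + 1 - k)) = 0 := by
  simpa [← mul_assoc, pow_mul] using sigma_iT_sum_neg_pos_general (2 * m) p k hk1 hk2

end
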